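/- For every natural number m, the predicate on pairs (V, V′) of m×m integer matrices asserting 'V and V′ are symmetric, unimodular, positive definite, and congruent over ℤ' is decidable in the computability-theoretic sense: it is a ComputablePred with respect to the canonical encoding of integer matrices (the Primcodable instance on Fin m → Fin m → ℤ). That is, there exists an algorithm that takes as input two integral, positive definite, symmetric, unimodular matrices and outputs whether or not they are congruent over ℤ. -/

import Mathlib

open Matrix

/-!
By Cauchy–Schwarz for the form `V` applied to `x` and `adj(V) eᵢ`, a positive definite integer
matrix `V` satisfies `det V * xᵢ² ≤ adj(V)ᵢᵢ * (xᵀ V x)`. As `det V ≥ 1`, every integral solution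
`P` of `V' = Pᵀ V P` therefore has entries of absolute value at most `tr (adj V) * tr V'`, which
leaves finitely many candidates to test. Positive definiteness is itself decidable, because by
Vieta's formulas a symmetric `V` is positive definite if and only if the characteristic polynomial
of `-V` has only positive coefficients. The determinant, the traces and these coefficients are
integer polynomials in the entries of `V`, hence primitive recursive.
-/

section CharpolyPositivity

open Polynomial
open scoped ComplexOrder

variable {n 𝕜 : Type*} [Fintype n] [DecidableEq n] [RCLike 𝕜]

lemma prod_X_add_C_coeff_pos {ι R : Type*} [CommSemiring R] [PartialOrder R]
    [IsStrictOrderedRing R] {s : Finset ι} {r : ι → R} (hr : ∀ i ∈ s, 0 < r i) {k : ℕ}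
    (hk : k ≤ s.card) : 0 < (∏ i ∈ s, (X + C (r i))).coeff k := by
  rw [Finset.prod_X_add_C_coeff s r hk]
  refine Finset.sum_pos (fun t ht => Finset.prod_pos fun i hi => hr i ?_) ?_
  · exact (Finset.mem_powersetCard.1 ht).1 hi
  · exact Finset.powersetCard_nonempty.2 (Nat.sub_le _ _)

lemma charpoly_neg_eq_prod_eigenvalues {A : Matrix n n 𝕜} (hA : A.IsHermitian) :
    (-A).charpoly = ∏ i, (X + C (hA.eigenvalues i : 𝕜)) := by
  conv_lhs => rw [hA.spectral_theorem, ← map_neg, Unitary.conjStarAlgAut_apply,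
    charpoly_mul_comm, ← mul_assoc]
  simp [charpoly_diagonal]

lemma posDef_iff_charpoly_neg_coeff_pos {A : Matrix n n 𝕜} (hA : A.IsHermitian) :
    A.PosDef ↔ ∀ k ≤ Fintype.card n, 0 < (-A).charpoly.coeff k := by
  refine ⟨fun h k hk => ?_, fun h => hA.posDef_iff_eigenvalues_pos.2 fun i => ?_⟩
  · rw [charpoly_neg_eq_prod_eigenvalues hA]
    exact prod_X_add_C_coeff_pos (fun i _ => RCLike.ofReal_pos.2 (h.eigenvalues_pos i)) hk
  · by_contra! hi
    have root : (-A).charpoly.eval (-(hA.eigenvalues i : 𝕜)) = 0 := by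
      rw [charpoly_neg_eq_prod_eigenvalues hA, eval_prod]
      exact Finset.prod_eq_zero (Finset.mem_univ i) (by simp)
    have nonneg : (0 : 𝕜) ≤ -(hA.eigenvalues i : 𝕜) := by
      rw [← RCLike.ofReal_neg, RCLike.ofReal_nonneg]
      exact neg_nonneg.2 hi
    refine root.not_gt ?_
    rw [eval_eq_sum_range, charpoly_natDegree_eq_dim]
    refine Finset.sum_pos' (fun k hk => mul_nonneg (h k ?_).le (pow_nonneg nonneg k))
      ⟨0, by simp, by simpa using h 0 (Nat.zero_le _)⟩
    exact Finset.mem_range_succ_iff.1 hk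

lemma posDef_map_intCast_iff {V : Matrix n n ℤ} :
    (V.map ((↑) : ℤ → ℝ)).PosDef ↔
      V.IsSymm ∧ ∀ k ≤ Fintype.card n, 0 < (-V).charpoly.coeff k := by
  have symm_iff : (V.map ((↑) : ℤ → ℝ)).IsHermitian ↔ V.IsSymm :=
    isHermitian_iff_isSymm.trans (isSymm_map_iff Int.cast_injective)
  have coeff_eq (k : ℕ) :
      (-V.map ((↑) : ℤ → ℝ)).charpoly.coeff k = ((-V).charpoly.coeff k : ℤ) := by
    rw [← Matrix.map_neg _ Int.cast_neg]
    exact (congrArg (coeff · k) (charpoly_map (-V) (Int.castRingHom ℝ))).trans (coeff_map _ k)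
  rw [← symm_iff]
  refine ⟨fun h => ⟨h.isHermitian, ?_⟩, fun ⟨hV, h⟩ => ?_⟩
  · simpa only [coeff_eq, Int.cast_pos] using (posDef_iff_charpoly_neg_coeff_pos h.isHermitian).1 h
  · exact (posDef_iff_charpoly_neg_coeff_pos hV).2 (by simpa only [coeff_eq, Int.cast_pos] using h)

end CharpolyPositivity

section EntryBound

variable {m n R : Type*} [Fintype m] [Fintype n] [DecidableEq m]
  [CommRing R] [LinearOrder R] [IsStrictOrderedRing R] [StarRing R] [TrivialStar R]

lemma det_mul_sq_le_adjugate_mul {M : Matrix m m R} (hM : M.PosSemidef) (hdet : 0 < M.det)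
    (x : m → R) (i : m) : M.det * x i ^ 2 ≤ M.adjugate i i * (x ⬝ᵥ M *ᵥ x) := by
  set y := M.adjugate *ᵥ Pi.single i 1 with hy
  have mulVec_y : M *ᵥ y = Pi.single i M.det := by
    rw [hy, mulVec_mulVec, mul_adjugate, smul_mulVec, one_mulVec, ← Pi.single_smul, smul_eq_mul,
      mul_one]
  have y_apply : y i = M.adjugate i i := by simp only [y, mulVec_single_one, col_apply]
  have y_form (z : m → R) : y ⬝ᵥ M *ᵥ z = M.det * z i := by
    rw [dotProduct_mulVec, ← mulVec_transpose, isHermitian_iff_isSymm.1 hM.isHermitian, mulVec_y,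
      single_dotProduct]
  have cauchySchwarz := LinearMap.BilinForm.apply_mul_apply_le_of_forall_zero_le (toBilin' M)
    (fun z => by simpa only [toBilin'_apply', star_trivial] using hM.dotProduct_mulVec_nonneg z) x y
  simp only [toBilin'_apply', mulVec_y, y_form, dotProduct_single, y_apply] at cauchySchwarz
  refine le_of_mul_le_mul_left ?_ hdet
  linear_combination cauchySchwarz

lemma adjugate_diag_nonneg {M : Matrix m m R} (hM : M.PosSemidef) (hdet : 0 < M.det) (i : m) :
    0 ≤ M.adjugate i i := by
  have conj : M.adjugateᴴ * M * M.adjugate = M.det • M.adjugate := by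
    rw [conjTranspose_eq_transpose_of_trivial, adjugate_transpose,
      isHermitian_iff_isSymm.1 hM.isHermitian, adjugate_mul, smul_mul, one_mul]
  have det_mul_nonneg := (hM.conjTranspose_mul_mul_same M.adjugate).diag_nonneg (i := i)
  rw [conj, Matrix.smul_apply, smul_eq_mul] at det_mul_nonneg
  exact (mul_nonneg_iff_of_pos_left hdet).1 det_mul_nonneg

lemma det_mul_sq_apply_le_trace_mul_trace {M : Matrix m m R} (hM : M.PosSemidef)
    (hdet : 0 < M.det) (P : Matrix m n R) (i : m) (j : n) :
    M.det * P i j ^ 2 ≤ M.adjugate.trace * (Pᵀ * M * P).trace := by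
  have adj_nonneg := adjugate_diag_nonneg hM hdet
  have gram_nonneg (j : n) : 0 ≤ (Pᵀ * M * P) j j := by
    simpa only [conjTranspose_eq_transpose_of_trivial]
      using (hM.conjTranspose_mul_mul_same P).diag_nonneg
  have gram_apply : (Pᵀ * M * P) j j = P.col j ⬝ᵥ M *ᵥ P.col j := by
    rw [Matrix.mul_assoc]
    rfl
  calc M.det * P i j ^ 2
    _ ≤ M.adjugate i i * (P.col j ⬝ᵥ M *ᵥ P.col j) := det_mul_sq_le_adjugate_mul hM hdet (P.col j) i
    _ = M.adjugate i i * (Pᵀ * M * P) j j := by rw [gram_apply]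
    _ ≤ M.adjugate.trace * (Pᵀ * M * P).trace :=
      mul_le_mul (Finset.single_le_sum (fun i _ => adj_nonneg i) (Finset.mem_univ i))
        (Finset.single_le_sum (fun j _ => gram_nonneg j) (Finset.mem_univ j)) (gram_nonneg j)
        (Finset.sum_nonneg fun i _ => adj_nonneg i)

end EntryBound

lemma posSemidef_of_map_intCast {n R : Type*} [Finite n] [CommRing R] [PartialOrder R]
    [IsStrictOrderedRing R] [StarRing R] [TrivialStar R] {V : Matrix n n ℤ}
    (hV : (V.map ((↑) : ℤ → R)).PosSemidef) : V.PosSemidef := by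
  have := Fintype.ofFinite n
  have form_cast (x : n → ℤ) : ((x ⬝ᵥ V *ᵥ x : ℤ) : R) =
      ((↑) ∘ x) ⬝ᵥ V.map ((↑) : ℤ → R) *ᵥ ((↑) ∘ x) :=
    (RingHom.map_dotProduct (Int.castRingHom R) x _).trans <|
      congrArg _ (funext (RingHom.map_mulVec (Int.castRingHom R) V x))
  refine .of_dotProduct_mulVec_nonneg ?_ fun x => ?_
  · exact isHermitian_iff_isSymm.2
      ((isSymm_map_iff Int.cast_injective).1 (isHermitian_iff_isSymm.1 hV.isHermitian))
  · rw [star_trivial, ← Int.cast_nonneg_iff (R := R), form_cast]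
    simpa only [star_trivial] using hV.dotProduct_mulVec_nonneg ((↑) ∘ x)

lemma abs_apply_le_trace_mul_trace {m n : Type*} [Fintype m] [Fintype n] [DecidableEq m]
    {V : Matrix m m ℤ} (hV : (V.map ((↑) : ℤ → ℝ)).PosDef) (P : Matrix m n ℤ) (i : m) (j : n) :
    |P i j| ≤ V.adjugate.trace * (Pᵀ * V * P).trace := by
  have hdet : 0 < V.det := by
    rw [← Int.cast_pos (R := ℝ), Int.cast_det]
    exact hV.det_pos
  calc |P i j|
    _ ≤ P i j ^ 2 := sq_abs (P i j) ▸ Int.le_self_sq |P i j|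
    _ ≤ V.det * P i j ^ 2 := le_mul_of_one_le_left (sq_nonneg _) hdet
    _ ≤ V.adjugate.trace * (Pᵀ * V * P).trace :=
      det_mul_sq_apply_le_trace_mul_trace (posSemidef_of_map_intCast hV.posSemidef) hdet P i j

lemma primrec_intEquivNatSumNat : Primrec Equiv.intEquivNatSumNat :=
  Primrec.encode_iff.1 <| Primrec.encode.of_eq <| by rintro (n | n) <;> rfl

lemma primrec_intEquivNatSumNat_symm : Primrec Equiv.intEquivNatSumNat.symm :=
  Primrec.encode_iff.1 <| Primrec.encode.of_eq <| by rintro (n | n) <;> rfl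

lemma primrec_int_natCast : Primrec ((↑) : ℕ → ℤ) :=
  primrec_intEquivNatSumNat_symm.comp Primrec.sumInl

lemma primrec_int_negSucc : Primrec Int.negSucc :=
  primrec_intEquivNatSumNat_symm.comp Primrec.sumInr

lemma primrec_int_toNat : Primrec Int.toNat :=
  (Primrec.sumCasesOn primrec_intEquivNatSumNat Primrec₂.right (Primrec₂.const 0)).of_eq <| by
    rintro (n | n) <;> rfl

lemma primrec_int_toNat_neg : Primrec fun z : ℤ => (-z).toNat :=
  (Primrec.sumCasesOn primrec_intEquivNatSumNat (Primrec₂.const 0)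
    (Primrec.succ.comp₂ Primrec₂.right)).of_eq <| by
      rintro (n | n)
      · exact (Int.toNat_neg_natCast n).symm
      · rfl

lemma primrec_int_subNatNat : Primrec₂ Int.subNatNat :=
  (Primrec.nat_casesOn (Primrec.nat_sub.comp Primrec.snd Primrec.fst)
    (primrec_int_natCast.comp Primrec.nat_sub) (primrec_int_negSucc.comp₂ Primrec₂.right)).of_eq
    fun ⟨a, b⟩ => by
      simp only [Int.subNatNat]
      cases b - a <;> rfl

lemma primrec_int_add : Primrec₂ ((· + ·) : ℤ → ℤ → ℤ) :=
  have pos := Primrec.nat_add.comp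
    (primrec_int_toNat.comp Primrec.fst) (primrec_int_toNat.comp Primrec.snd)
  have neg := Primrec.nat_add.comp
    (primrec_int_toNat_neg.comp Primrec.fst) (primrec_int_toNat_neg.comp Primrec.snd)
  (primrec_int_subNatNat.comp pos neg).of_eq fun ⟨a, b⟩ => by
    rw [Int.subNatNat_eq_coe]
    lia

lemma primrec_int_neg : Primrec (Neg.neg : ℤ → ℤ) :=
  (primrec_int_subNatNat.comp primrec_int_toNat_neg primrec_int_toNat).of_eq fun a => by
    rw [Int.subNatNat_eq_coe]
    lia

lemma primrec_int_mul : Primrec₂ ((· * ·) : ℤ → ℤ → ℤ) :=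
  have pos₁ := primrec_int_toNat.comp Primrec.fst
  have pos₂ := primrec_int_toNat.comp Primrec.snd
  have neg₁ := primrec_int_toNat_neg.comp Primrec.fst
  have neg₂ := primrec_int_toNat_neg.comp Primrec.snd
  (primrec_int_subNatNat.comp
    (Primrec.nat_add.comp (Primrec.nat_mul.comp pos₁ pos₂) (Primrec.nat_mul.comp neg₁ neg₂))
    (Primrec.nat_add.comp (Primrec.nat_mul.comp pos₁ neg₂) (Primrec.nat_mul.comp neg₁ pos₂))).of_eq
    fun ⟨a, b⟩ => by
      dsimp only
      rw [Int.subNatNat_eq_coe]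
      conv_rhs => rw [← Int.toNat_sub_toNat_neg a, ← Int.toNat_sub_toNat_neg b]
      push_cast
      ring

lemma primrec_int_range : Primrec₂ Int.range :=
  have length : Primrec₂ fun a b : ℤ => (b - a).toNat :=
    primrec_int_toNat.comp₂ (primrec_int_add.comp₂ .right (primrec_int_neg.comp₂ .left))
  Primrec.list_map (Primrec.list_range.comp length)
    (primrec_int_add.comp₂ (Primrec.fst.comp₂ .left) (primrec_int_natCast.comp₂ .right))

lemma primrecPred_int_pos : PrimrecPred fun z : ℤ => 0 < z :=
  (Primrec.nat_lt.comp (Primrec.const 0) primrec_int_toNat).of_eq fun _ => Int.lt_toNat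

lemma primrecPred_int_isUnit : PrimrecPred (IsUnit : ℤ → Prop) :=
  ((Primrec.eq.comp Primrec.id (Primrec.const 1)).or
    (Primrec.eq.comp Primrec.id (Primrec.const (-1)))).of_eq fun _ => Int.isUnit_iff.symm

section PrimrecMatrix

variable {α β : Type*} [Primcodable α] [Primcodable β]

lemma primrec_int_sum {ι : Type*} (s : Finset ι) {f : ι → α → ℤ} (hf : ∀ i, Primrec (f i)) :
    Primrec fun a => ∑ i ∈ s, f i a := by
  classical
  induction s using Finset.induction_on with
  | empty => simpa using Primrec.const 0
  | insert i s hi ih => simpa [Finset.sum_insert hi] using primrec_int_add.comp (hf i) ih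

lemma primrec_mvPolynomial_eval {ι : Type*} (q : MvPolynomial ι ℤ) {x : α → ι → ℤ}
    (hx : ∀ i, Primrec fun a => x a i) : Primrec fun a => MvPolynomial.eval (x a) q := by
  induction q using MvPolynomial.induction_on with
  | C c => simpa using Primrec.const c
  | add p q hp hq => simpa using primrec_int_add.comp hp hq
  | mul_X p i hp => simpa using primrec_int_mul.comp hp (hx i)

lemma primrecPred_forall_mem_finset {ι : Type*} (s : Finset ι) {p : ι → α → Prop}
    (hp : ∀ i, PrimrecPred (p i)) : PrimrecPred fun a => ∀ i ∈ s, p i a := by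
  classical
  induction s using Finset.induction_on with
  | empty => simpa using (Primrec.const true).primrecPred (p := fun _ : α => True)
  | insert i s _ ih => simpa using (hp i).and ih

lemma primrec_pi_iff {n : ℕ} {f : α → Fin n → β} : Primrec f ↔ ∀ i, Primrec fun a => f a i :=
  Primrec.fin_curry.trans ⟨fun h i => h.comp .id (.const i), fun h => (Primrec.fin_curry₁.2 h).swap⟩

lemma primrec_fin_cons {n : ℕ} :
    Primrec₂ fun (x : β) (f : Fin n → β) => (Fin.cons x f : Fin (n + 1) → β) :=
  primrec_pi_iff.2 <| Fin.cases Primrec.fst fun i => by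
    simpa only [Fin.cons_succ] using primrec_pi_iff.1 (Primrec.snd (α := β)) i

/-- The list of all functions `Fin n → γ` with values in the list `L`, as a search space for
bounded quantifiers: `Fintype.piFinset` for lists, which unlike finsets are encodable. -/
def listPi {γ : Type*} : (n : ℕ) → List γ → List (Fin n → γ)
  | 0, _ => [Fin.elim0]
  | n + 1, L => L.flatMap fun x => (listPi n L).map (Fin.cons x)

lemma mem_listPi {γ : Type*} {L : List γ} :
    ∀ {n : ℕ} {f : Fin n → γ}, f ∈ listPi n L ↔ ∀ i, f i ∈ L
  | 0, f => by simp [listPi, eq_iff_true_of_subsingleton]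
  | n + 1, f => by
    simp only [listPi, List.mem_flatMap, List.mem_map, mem_listPi, Fin.forall_fin_succ]
    constructor
    · rintro ⟨x, hx, g, hg, rfl⟩
      exact ⟨hx, hg⟩
    · rintro ⟨hx, hg⟩
      exact ⟨f 0, hx, Fin.tail f, hg, Fin.cons_self_tail f⟩

lemma primrec_listPi : ∀ n : ℕ, Primrec (listPi n : List β → List (Fin n → β))
  | 0 => Primrec.const _
  | n + 1 => Primrec.list_flatMap .id <| Primrec.list_map ((primrec_listPi n).comp .fst) <|
    primrec_fin_cons.comp₂ (Primrec.snd.comp₂ .left) .right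

/-- The encoding of matrices as functions of two indices; `Matrix.of` is the identity on codes. -/
instance primcodableMatrix {m n : ℕ} : Primcodable (Matrix (Fin m) (Fin n) β) :=
  inferInstanceAs (Primcodable (Fin m → Fin n → β))

variable {l m n : ℕ}

lemma primrec_matrix_iff {f : α → Matrix (Fin m) (Fin n) β} :
    Primrec f ↔ ∀ i j, Primrec fun a => f a i j :=
  primrec_pi_iff.trans <| forall_congr' fun _ => primrec_pi_iff

lemma primrec_matrix_apply (i : Fin m) (j : Fin n) :
    Primrec fun M : Matrix (Fin m) (Fin n) β => M i j :=
  primrec_matrix_iff.1 Primrec.id i j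

lemma primrec_transpose : Primrec (transpose : Matrix (Fin m) (Fin n) β → _) :=
  primrec_matrix_iff.2 fun i j => primrec_matrix_apply j i

lemma primrec_matrix_mul :
    Primrec₂ fun (M : Matrix (Fin l) (Fin m) ℤ) (N : Matrix (Fin m) (Fin n) ℤ) => M * N :=
  primrec_matrix_iff.2 fun i j => (primrec_int_sum Finset.univ fun k => primrec_int_mul.comp
    ((primrec_matrix_apply i k).comp .fst) ((primrec_matrix_apply k j).comp .snd)).of_eq
    fun _ => mul_apply.symm

lemma primrec_det : Primrec (det : Matrix (Fin n) (Fin n) ℤ → ℤ) :=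
  (primrec_mvPolynomial_eval (det (mvPolynomialX (Fin n) (Fin n) ℤ))
    fun p => primrec_matrix_apply p.1 p.2).of_eq fun M => by
      rw [RingHom.map_det, mvPolynomialX_mapMatrix_eval]

lemma primrec_trace_adjugate : Primrec fun M : Matrix (Fin n) (Fin n) ℤ => M.adjugate.trace :=
  (primrec_mvPolynomial_eval (mvPolynomialX (Fin n) (Fin n) ℤ).adjugate.trace
    fun p => primrec_matrix_apply p.1 p.2).of_eq fun M => by
      rw [AddMonoidHom.map_trace, ← RingHom.mapMatrix_apply, RingHom.map_adjugate,
        mvPolynomialX_mapMatrix_eval]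

lemma primrec_charpoly_coeff (k : ℕ) :
    Primrec fun M : Matrix (Fin n) (Fin n) ℤ => M.charpoly.coeff k :=
  (primrec_mvPolynomial_eval ((charpoly.univ ℤ (Fin n)).coeff k)
    fun p => primrec_matrix_apply p.1 p.2).of_eq fun M =>
      charpoly.univ_coeff_eval₂Hom (Fin n) (RingHom.id ℤ) (fun p => M p.1 p.2) k

lemma primrec_trace : Primrec (trace : Matrix (Fin n) (Fin n) ℤ → ℤ) :=
  primrec_int_sum Finset.univ fun i => primrec_matrix_apply i i

lemma primrec_matrix_neg : Primrec (Neg.neg : Matrix (Fin m) (Fin n) ℤ → _) :=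
  primrec_matrix_iff.2 fun i j => primrec_int_neg.comp (primrec_matrix_apply i j)

lemma primrecPred_isSymm : PrimrecPred (IsSymm : Matrix (Fin n) (Fin n) β → Prop) :=
  Primrec.eq.comp primrec_transpose Primrec.id

lemma primrecPred_isUnit_det : PrimrecPred fun M : Matrix (Fin n) (Fin n) ℤ => IsUnit M.det :=
  primrecPred_int_isUnit.comp primrec_det

lemma primrecPred_posDef_map_intCast :
    PrimrecPred fun V : Matrix (Fin n) (Fin n) ℤ => (V.map ((↑) : ℤ → ℝ)).PosDef :=
  have coeff_pos (k : ℕ) :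
      PrimrecPred fun V : Matrix (Fin n) (Fin n) ℤ => 0 < (-V).charpoly.coeff k :=
    primrecPred_int_pos.comp ((primrec_charpoly_coeff k).comp primrec_matrix_neg)
  (primrecPred_isSymm.and (primrecPred_forall_mem_finset (Finset.Iic n) coeff_pos)).of_eq
    fun V => by simp only [posDef_map_intCast_iff, Finset.mem_Iic, Fintype.card_fin]

lemma primrecPred_isSymm_isUnit_det_posDef :
    PrimrecPred fun V : Matrix (Fin n) (Fin n) ℤ =>
      V.IsSymm ∧ IsUnit V.det ∧ (V.map ((↑) : ℤ → ℝ)).PosDef :=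
  primrecPred_isSymm.and (primrecPred_isUnit_det.and primrecPred_posDef_map_intCast)

lemma primrecRel_eq_transpose_mul_mul :
    PrimrecRel fun (P : Matrix (Fin m) (Fin n) ℤ)
      (p : Matrix (Fin m) (Fin m) ℤ × Matrix (Fin n) (Fin n) ℤ) => p.2 = Pᵀ * p.1 * P :=
  have gram := primrec_matrix_mul.comp
    (primrec_matrix_mul.comp (primrec_transpose.comp .fst) (Primrec.fst.comp .snd)) .fst
  Primrec.eq.comp (Primrec.snd.comp .snd) gram

/-- The list of all integer `m × n` matrices whose entries have absolute value at most `b`, in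
which solutions of `V' = Pᵀ V P` are searched. -/
def boundedMatrices (m n : ℕ) (b : ℤ) : List (Matrix (Fin m) (Fin n) ℤ) :=
  listPi m (listPi n (Int.range (-b) (b + 1)))

lemma mem_boundedMatrices {b : ℤ} {P : Matrix (Fin m) (Fin n) ℤ} :
    P ∈ boundedMatrices m n b ↔ ∀ i j, |P i j| ≤ b :=
  mem_listPi.trans <| forall_congr' fun _ => mem_listPi.trans <| forall_congr' fun _ => by
    rw [Int.mem_range_iff, Int.lt_add_one_iff, abs_le]

lemma primrec_boundedMatrices : Primrec (boundedMatrices m n) :=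
  (primrec_listPi m).comp <| (primrec_listPi n).comp <|
    primrec_int_range.comp primrec_int_neg (primrec_int_add.comp .id (.const 1))

end PrimrecMatrix

theorem computablePred_posDef_congruent_general {m n : ℕ} {R : Matrix (Fin m) (Fin n) ℤ → Prop}
    (hR : PrimrecPred R) :
    PrimrecPred fun p : Matrix (Fin m) (Fin m) ℤ × Matrix (Fin n) (Fin n) ℤ =>
      (p.1.map ((↑) : ℤ → ℝ)).PosDef ∧ ∃ P, R P ∧ p.2 = Pᵀ * p.1 * P := by
  have primrec_candidates : Primrec fun p : Matrix (Fin m) (Fin m) ℤ × Matrix (Fin n) (Fin n) ℤ =>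
      boundedMatrices m n (p.1.adjugate.trace * p.2.trace) :=
    primrec_boundedMatrices.comp
      (primrec_int_mul.comp (primrec_trace_adjugate.comp .fst) (primrec_trace.comp .snd))
  have primrecRel_solution : PrimrecRel fun (P : Matrix (Fin m) (Fin n) ℤ)
      (p : Matrix (Fin m) (Fin m) ℤ × Matrix (Fin n) (Fin n) ℤ) => R P ∧ p.2 = Pᵀ * p.1 * P :=
    (hR.comp .fst).and primrecRel_eq_transpose_mul_mul
  refine ((primrecPred_posDef_map_intCast.comp .fst).and
    (primrecRel_solution.exists_mem_list.comp primrec_candidates .id)).of_eq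
    fun p => and_congr_right fun hV => ?_
  refine ⟨fun ⟨P, _, hP⟩ => ⟨P, hP⟩, fun ⟨P, hRP, hP⟩ => ⟨P, ?_, hRP, hP⟩⟩
  simpa only [mem_boundedMatrices, hP] using abs_apply_le_trace_mul_trace hV P

/-- The predicate "two integer matrices are symmetric, unimodular, positive definite,
and congruent over `ℤ`" is computably decidable. -/
theorem computablePred_posDef_congruent (m : ℕ) :
    ComputablePred fun p : (Fin m → Fin m → ℤ) × (Fin m → Fin m → ℤ) =>
      (Matrix.of p.1).IsSymm ∧ (Matrix.of p.2).IsSymm ∧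
      IsUnit (Matrix.of p.1).det ∧ IsUnit (Matrix.of p.2).det ∧
      ((Matrix.of p.1).map ((↑) : ℤ → ℝ)).PosDef ∧
      ((Matrix.of p.2).map ((↑) : ℤ → ℝ)).PosDef ∧
      ∃ P : Matrix (Fin m) (Fin m) ℤ, IsUnit P.det ∧
        Matrix.of p.2 = Pᵀ * Matrix.of p.1 * P := by
  exact (((primrecPred_isSymm_isUnit_det_posDef.comp .fst).and <|
    (primrecPred_isSymm_isUnit_det_posDef.comp .snd).and <|
    computablePred_posDef_congruent_general primrecPred_isUnit_det).of_eq
    fun _ => by tauto).computablePred
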